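/- Let p be a pmf on 𝒳ⁿ with p(xⁿ) > 0 for all xⁿ, let d: 𝒳ⁿ×𝒳̂ⁿ→[0,∞) be a distortion function, and let D > 0 be such that some conditional pmf r satisfies Σ_{xⁿ,x̂ⁿ} p(xⁿ)r(x̂ⁿ|xⁿ)d(xⁿ,x̂ⁿ) < D. Then the n-th order rate distortion function with feed-forward admits the geometric programming form Rₙ(D) = max (1/n)·( −λD + Σ_{xⁿ} p(xⁿ) log₂ γ(xⁿ) ), where the maximum is over λ ≥ 0, γ: 𝒳ⁿ→(0,∞), and families {p′_i(x_i|x^{i−1},x̂^i)}_{i=1}^n of strictly positive conditional pmfs on 𝒳, subject to the constraints log₂ p(xⁿ) + log₂ γ(xⁿ) − λ·d(xⁿ,x̂ⁿ) − Σ_{i=1}^n log₂ p′_i(x_i|x^{i−1},x̂^i) ≤ 0 for all xⁿ, x̂ⁿ, and Σ_{x_i} p′_i(x_i|x^{i−1},x̂^i) = 1 for all i, x^{i−1}, x̂^i. -/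

import Mathlib

open scoped BigOperators
open Filter

noncomputable section

namespace FFRD

variable {X Y : Type} [Fintype X] [DecidableEq X] [Fintype Y] [DecidableEq Y] {n : ℕ}

/-- `p` is a probability mass function on a finite type. -/
def IsPMF {α : Type} [Fintype α] (p : α → ℝ) : Prop :=
  (∀ a, 0 ≤ p a) ∧ ∑ a, p a = 1

/-- `r` is a conditional pmf on `Fin n → Y` given `Fin n → X`. -/
def IsCondPMF (r : (Fin n → X) → (Fin n → Y) → ℝ) : Prop :=
  (∀ x y, 0 ≤ r x y) ∧ ∀ x, ∑ y, r x y = 1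

/-- The causal conditioning pmf `q_r(ŷⁿ‖x^{n-1})` induced by the joint pmf `p(x)·r(y|x)`:
the product over `i` of the conditional probabilities `P(y_i | y^{i-1}, x^{i-1})`. -/
def causalCond (p : (Fin n → X) → ℝ) (r : (Fin n → X) → (Fin n → Y) → ℝ)
    (x : Fin n → X) (y : Fin n → Y) : ℝ :=
  ∏ i : Fin n,
    ((∑ x' : Fin n → X, ∑ y' : Fin n → Y,
        if (∀ j, j < i → x' j = x j) ∧ (∀ j, j ≤ i → y' j = y j)
        then p x' * r x' y' else 0) /
      (∑ x' : Fin n → X, ∑ y' : Fin n → Y,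
        if (∀ j, j < i → x' j = x j) ∧ (∀ j, j < i → y' j = y j)
        then p x' * r x' y' else 0))

/-- Directed information `I(X̂ⁿ → Xⁿ)` computed from source pmf `p` and conditional pmf `r`. -/
def directedInfo (p : (Fin n → X) → ℝ) (r : (Fin n → X) → (Fin n → Y) → ℝ) : ℝ :=
  ∑ x, ∑ y, p x * r x y * Real.logb 2 (r x y / causalCond p r x y)

/-- The `n`-th order rate distortion function with feed-forward. -/
def Rn (n : ℕ) (p : (Fin n → X) → ℝ) (d : (Fin n → X) → (Fin n → Y) → ℝ) (D : ℝ) : ℝ :=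
  (1 / (n : ℝ)) *
    sInf {v | ∃ r : (Fin n → X) → (Fin n → Y) → ℝ, IsCondPMF r ∧
      (∑ x, ∑ y, p x * r x y * d x y) ≤ D ∧ v = directedInfo p r}

/-- Left shift on sequences. -/
def shift (X : Type) : (ℕ → X) → (ℕ → X) := fun ω k => ω (k + 1)

/-- The law of the first `n` coordinates under `μ`. -/
def lawFin [MeasurableSpace X] (μ : MeasureTheory.Measure (ℕ → X)) (n : ℕ)
    (x : Fin n → X) : ℝ :=
  (μ {ω | ∀ i : Fin n, ω (i : ℕ) = x i}).toReal

/-- Per-letter distortion extended to blocks of length `L`. -/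
def dBlock (d0 : X → Y → ℝ) (L : ℕ) (x : Fin L → X) (y : Fin L → Y) : ℝ :=
  (1 / (L : ℝ)) * ∑ i, d0 (x i) (y i)

end FFRD

/-!
The directed information of `r` is the supremum, over strictly positive causal kernels `f`, of the
mean of `∑ᵢ log₂ fᵢ(xᵢ | xⁱ⁻¹, x̂ⁱ) - log₂ p(xⁿ)`: the gap is the divergence of `p r` from
`q_r ∏ᵢ fᵢ`, and it vanishes in the limit when `f` is a smoothing of the conditional pmfs of `p r`.
Hence `n Rₙ(D)` is an inf-sup of a Lagrangian that is linear in `r` and concave in `(λ, f)`.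
For fixed `(λ, f)` the best `r` puts all its mass on a minimising `x̂ⁿ` for each `xⁿ`, and writing
the minimum as `log₂ γ(xⁿ) - λ D` turns the dual into the geometric program. The dual maximum is
attained because the strictly feasible `r` bounds `λ` on superlevel sets, after which `p > 0` keeps
`f` away from `0`. Sion's minimax theorem then provides an `r` matching that maximum.
-/

namespace FFRD

section Minimax

variable {E F β : Type*} [LinearOrder β] [DenselyOrdered β]
  [AddCommGroup E] [Module ℝ E] [TopologicalSpace E] [IsTopologicalAddGroup E] [ContinuousSMul ℝ E]
  [AddCommGroup F] [Module ℝ F] [TopologicalSpace F] [IsTopologicalAddGroup F] [ContinuousSMul ℝ F]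

lemma exists_forall_le_of_forall_exists_le {S : Set E} {T : Set F} {φ : E → F → β} {v : β}
    (hS : S.Nonempty) (hScompact : IsCompact S) (hSconvex : Convex ℝ S) (hTconvex : Convex ℝ T)
    (hlsc : ∀ y ∈ T, LowerSemicontinuousOn (φ · y) S)
    (hquasiconvex : ∀ y ∈ T, QuasiconvexOn ℝ S (φ · y))
    (husc : ∀ x ∈ S, UpperSemicontinuousOn (φ x) T)
    (hquasiconcave : ∀ x ∈ S, QuasiconcaveOn ℝ T (φ x))
    (h : ∀ y ∈ T, ∃ x ∈ S, φ x y ≤ v) :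
    ∃ x ∈ S, ∀ y ∈ T, φ x y ≤ v := by
  by_contra! hcon
  have hempty : S ∩ ⋂ y ∈ T, (φ · y) ⁻¹' Set.Iic v = ∅ := by
    refine Set.eq_empty_of_forall_notMem fun x ⟨hxS, hx⟩ => ?_
    obtain ⟨y, hyT, hy⟩ := hcon x hxS
    exact hy.not_ge (Set.mem_iInter₂.1 hx y hyT)
  obtain ⟨s, hs⟩ :=
    (LowerSemicontinuousOn.inter_biInter_preimage_Iic_eq_empty_iff_exists_finset
      hScompact hlsc).1 hempty
  obtain ⟨y, hyT, hy⟩ := Sion.exists_lt_iInf_of_lt_iInf_of_finite hS hScompact hlsc hquasiconvex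
    hTconvex husc hquasiconcave hSconvex (s.finite_toSet.image Subtype.val)
    (Subtype.coe_image_subset T s)
    fun x hx => (hs x hx).imp' Subtype.val fun i hi => ⟨⟨i, hi.1, rfl⟩, hi.2⟩
  obtain ⟨x, hxS, hx⟩ := h y hyT
  exact (hy x hxS).not_ge hx

end Minimax

section Gibbs

lemma sum_mul_logb_div_nonneg {ι : Type*} [Fintype ι] {b : ℝ} (hb : 1 < b) {w q : ι → ℝ}
    (hw : ∀ i, 0 ≤ w i) (hq : ∀ i, 0 ≤ q i) (hac : ∀ i, 0 < w i → 0 < q i)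
    (hsum : ∑ i, q i ≤ ∑ i, w i) :
    0 ≤ ∑ i, w i * Real.logb b (w i / q i) := by
  have hlog : ∀ i, w i - q i ≤ w i * Real.log (w i / q i) := by
    intro i
    rcases (hw i).eq_or_lt with hwi | hwi
    · simpa [← hwi] using hq i
    · have hqi := hac i hwi
      calc w i - q i = w i * (1 - (w i / q i)⁻¹) := by field_simp
        _ ≤ _ := by gcongr; exact Real.one_sub_inv_le_log_of_pos (div_pos hwi hqi)
  calc 0 ≤ (∑ i, (w i - q i)) / Real.log b :=
        div_nonneg (by simpa using hsum) (Real.log_pos hb).le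
    _ ≤ (∑ i, w i * Real.log (w i / q i)) / Real.log b := by
        gcongr with i
        · exact (Real.log_pos hb).le
        · exact hlog i
    _ = ∑ i, w i * Real.logb b (w i / q i) := by
        simp only [Finset.sum_div, Real.logb, mul_div_assoc]

end Gibbs

section CausalProduct

lemma sum_prod_le_one_of_causal {Z : Type*} [Fintype Z] {n : ℕ}
    {h : Fin n → (Fin n → Z) → ℝ} (hnonneg : ∀ i z, 0 ≤ h i z)
    (hcausal : ∀ i z z', (∀ j, j ≤ i → z j = z' j) → h i z = h i z')
    (hsum : ∀ i z, ∑ a, h i (Function.update z i a) ≤ 1) :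
    ∑ z, ∏ i, h i z ≤ 1 := by
  induction n with
  | zero => simp
  | succ n ih =>
    rcases isEmpty_or_nonempty Z with hZ | ⟨⟨c⟩⟩
    · simp
    let g : Fin n → (Fin n → Z) → ℝ := fun i z => h i.castSucc (Fin.snoc z c)
    have hinit : ∀ i (z z' : Fin n → Z) a b, (∀ j, j ≤ i → z j = z' j) →
        h (Fin.castSucc i) (Fin.snoc z a) = h (Fin.castSucc i) (Fin.snoc z' b) := by
      refine fun i z z' a b hz => hcausal _ _ _ fun j hj => ?_
      induction j using Fin.lastCases with
      | last => exact absurd hj (Fin.castSucc_lt_last i).not_ge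
      | cast j => simpa only [Fin.snoc_castSucc] using hz j (Fin.castSucc_le_castSucc_iff.1 hj)
    have hg : ∑ z, ∏ i, g i z ≤ 1 := by
      refine ih (fun i z => hnonneg _ _) (fun i z z' hz => hinit i z z' c c hz) fun i z => ?_
      simpa only [g, Fin.snoc_update] using hsum i.castSucc (Fin.snoc z c)
    have hlast : ∀ z : Fin n → Z, ∑ a, h (Fin.last n) (Fin.snoc z a) ≤ 1 := fun z => by
      simpa only [Fin.update_snoc_last] using hsum (Fin.last n) (Fin.snoc z c)
    calc ∑ z, ∏ i, h i z
        = ∑ z : Fin n → Z, ∑ a, ∏ i, h i (Fin.snoc z a) := by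
          rw [← (Fin.snocEquiv fun _ => Z).sum_comp, Fintype.sum_prod_type_right]
          rfl
      _ = ∑ z : Fin n → Z, (∏ i, g i z) * ∑ a, h (Fin.last n) (Fin.snoc z a) := by
          simp only [Fin.prod_univ_castSucc, Finset.mul_sum]
          refine Finset.sum_congr rfl fun z _ => Finset.sum_congr rfl fun a _ => ?_
          exact congrArg (· * _) (Finset.prod_congr rfl fun i _ => hinit i z z a c fun _ _ => rfl)
      _ ≤ ∑ z, ∏ i, g i z := by
          refine Finset.sum_le_sum fun z _ => mul_le_of_le_one_right ?_ (hlast z)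
          exact Finset.prod_nonneg fun i _ => hnonneg _ _
      _ ≤ 1 := hg

end CausalProduct

section Prefix

variable {α X Y : Type*} {n : ℕ}

/-- The sequences `u` and `v` have the same first `k` letters. -/
def AgreeBelow (k : ℕ) (u v : Fin n → α) : Prop :=
  ∀ j : Fin n, (j : ℕ) < k → u j = v j

instance [DecidableEq α] (k : ℕ) (u v : Fin n → α) : Decidable (AgreeBelow k u v) :=
  inferInstanceAs (Decidable (∀ j : Fin n, (j : ℕ) < k → u j = v j))

lemma AgreeBelow.refl (k : ℕ) (u : Fin n → α) : AgreeBelow k u u := fun _ _ => rfl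

lemma AgreeBelow.congr_right {k : ℕ} {u v v' : Fin n → α} (h : AgreeBelow k v v') :
    AgreeBelow k u v ↔ AgreeBelow k u v' :=
  forall₂_congr fun j hj => by rw [h j hj]

lemma agreeBelow_update_self (i : Fin n) (u : Fin n → α) (a : α) :
    AgreeBelow i (Function.update u i a) u :=
  fun _ hj => Function.update_of_ne (Fin.ne_of_lt hj) _ _

lemma agreeBelow_succ_update_iff {i : Fin n} {u v : Fin n → α} {a : α} :
    AgreeBelow (i + 1) v (Function.update u i a) ↔ AgreeBelow i v u ∧ v i = a := by
  rw [← (agreeBelow_update_self i u a).congr_right]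
  refine ⟨fun h => ⟨fun j hj => h j (hj.trans (Nat.lt_succ_self _)), ?_⟩, fun ⟨h, hi⟩ j hj => ?_⟩
  · simpa using h i (Nat.lt_succ_self _)
  · rcases (Nat.lt_succ_iff.1 hj).lt_or_eq with hlt | heq
    · exact h j hlt
    · rw [Fin.ext heq, hi, Function.update_self]

lemma sum_sum_agreeBelow_succ_update {M : Type*} [AddCommMonoid M] [Fintype α] [DecidableEq α]
    (g : (Fin n → α) → M) (i : Fin n) (u : Fin n → α) :
    ∑ a, ∑ v with AgreeBelow (i + 1) v (Function.update u i a), g v =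
      ∑ v with AgreeBelow i v u, g v := by
  simp only [agreeBelow_succ_update_iff, ← Finset.filter_filter]
  exact Finset.sum_fiberwise _ (fun v => v i) g

variable [Fintype X] [DecidableEq X] [Fintype Y] [DecidableEq Y]

/-- The mass that the weight `w` on pairs of sequences gives to the event that the first `k` letters
agree with `x` and the first `l` letters agree with `y`; for a joint pmf this is `P(xᵏ, x̂ˡ)`. -/
def prefixMass (w : (Fin n → X) → (Fin n → Y) → ℝ) (k l : ℕ) (x : Fin n → X) (y : Fin n → Y) : ℝ :=
  ∑ x' with AgreeBelow k x' x, ∑ y' with AgreeBelow l y' y, w x' y'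

variable {w : (Fin n → X) → (Fin n → Y) → ℝ}

lemma prefixMass_congr {k l : ℕ} {x x' : Fin n → X} {y y' : Fin n → Y}
    (hx : AgreeBelow k x x') (hy : AgreeBelow l y y') :
    prefixMass w k l x y = prefixMass w k l x' y' := by
  simp only [prefixMass, hx.congr_right, hy.congr_right]

lemma prefixMass_nonneg (hw : ∀ x y, 0 ≤ w x y) (k l : ℕ) (x : Fin n → X) (y : Fin n → Y) :
    0 ≤ prefixMass w k l x y :=
  Finset.sum_nonneg fun _ _ => Finset.sum_nonneg fun _ _ => hw _ _

lemma le_prefixMass (hw : ∀ x y, 0 ≤ w x y) (k l : ℕ) (x : Fin n → X) (y : Fin n → Y) :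
    w x y ≤ prefixMass w k l x y := by
  calc w x y ≤ ∑ y' with AgreeBelow l y' y, w x y' :=
        Finset.single_le_sum (f := w x) (fun y' _ => hw x y') (by simp [AgreeBelow.refl])
    _ ≤ prefixMass w k l x y :=
        Finset.single_le_sum (f := fun x' => ∑ y' with AgreeBelow l y' y, w x' y')
          (fun x' _ => Finset.sum_nonneg fun y' _ => hw x' y') (by simp [AgreeBelow.refl])

lemma prefixMass_zero_zero (x : Fin n → X) (y : Fin n → Y) :
    prefixMass w 0 0 x y = ∑ x', ∑ y', w x' y' := by
  simp [prefixMass, AgreeBelow]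

lemma prefixMass_self_self (x : Fin n → X) (y : Fin n → Y) : prefixMass w n n x y = w x y := by
  simp [prefixMass, AgreeBelow, ← funext_iff, Finset.filter_eq']

lemma sum_prefixMass_succ_update_left (l : ℕ) (i : Fin n) (x : Fin n → X) (y : Fin n → Y) :
    ∑ a, prefixMass w (i + 1) l (Function.update x i a) y = prefixMass w i l x y :=
  sum_sum_agreeBelow_succ_update _ i x

lemma sum_prefixMass_succ_update_right (k : ℕ) (i : Fin n) (x : Fin n → X) (y : Fin n → Y) :
    ∑ b, prefixMass w k (i + 1) x (Function.update y i b) = prefixMass w k i x y := by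
  simp only [prefixMass]
  rw [Finset.sum_comm]
  exact Finset.sum_congr rfl fun x' _ => sum_sum_agreeBelow_succ_update (w x') i y

lemma prod_prefixMass_div (hw : ∀ x y, 0 ≤ w x y) {x : Fin n → X} {y : Fin n → Y}
    (hxy : 0 < w x y) :
    ∏ i : Fin n, prefixMass w (i + 1) (i + 1) x y / prefixMass w i i x y =
      w x y / ∑ x', ∑ y', w x' y' := by
  have hne : ∀ k, prefixMass w k k x y ≠ 0 := fun k => (hxy.trans_le (le_prefixMass hw k k x y)).ne'
  rw [Fin.prod_univ_eq_prod_range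
    (fun k => prefixMass w (k + 1) (k + 1) x y / prefixMass w k k x y) n]
  simpa [prefixMass_self_self, prefixMass_zero_zero] using
    congrArg Units.val (Finset.prod_range_div (fun k => Units.mk0 _ (hne k)) n)

end Prefix

section CausalKernel

variable {X Y : Type*} [Fintype X] {n : ℕ}

/-- `f i x y a` is a strictly positive conditional pmf `p′ᵢ(a | xⁱ⁻¹, x̂ⁱ)`: full sequences are
passed as arguments, and `causal` says that only `xⁱ⁻¹` and `x̂ⁱ` matter. -/
structure IsCausalKernel (f : Fin n → (Fin n → X) → (Fin n → Y) → X → ℝ) : Prop where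
  pos : ∀ i x y a, 0 < f i x y a
  causal : ∀ i x x' y y', (∀ j, j < i → x j = x' j) → (∀ j, j ≤ i → y j = y' j) →
    f i x y = f i x' y'
  sum_eq_one : ∀ i x y, ∑ a, f i x y a = 1

lemma IsCausalKernel.le_one {f : Fin n → (Fin n → X) → (Fin n → Y) → X → ℝ}
    (hf : IsCausalKernel f) (i : Fin n) (x : Fin n → X) (y : Fin n → Y) (a : X) :
    f i x y a ≤ 1 :=
  hf.sum_eq_one i x y ▸
    Finset.single_le_sum (f := f i x y) (fun b _ => (hf.pos i x y b).le) (Finset.mem_univ a)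

lemma isCausalKernel_uniform :
    IsCausalKernel fun (_ : Fin n) (_ : Fin n → X) (_ : Fin n → Y) (_ : X) =>
      (Fintype.card X : ℝ)⁻¹ where
  pos i x _ _ := by
    have : Nonempty X := ⟨x i⟩
    positivity
  causal _ _ _ _ _ _ _ := rfl
  sum_eq_one i x _ := by
    have : Nonempty X := ⟨x i⟩
    simp

lemma convex_ofPred_isCausalKernel :
    Convex ℝ {f : Fin n → (Fin n → X) → (Fin n → Y) → X → ℝ | IsCausalKernel f} := by
  intro f hf g hg s t hs ht hst
  refine ⟨fun i x y a => ?_, fun i x x' y y' hx hy => ?_, fun i x y => ?_⟩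
  · exact convex_Ioi (0 : ℝ) (hf.pos i x y a) (hg.pos i x y a) hs ht hst
  · simp only [Pi.add_apply, Pi.smul_apply, hf.causal i x x' y y' hx hy,
      hg.causal i x x' y y' hx hy]
  · simp [Finset.sum_add_distrib, ← Finset.mul_sum, hf.sum_eq_one, hg.sum_eq_one, hst]

lemma isCompact_ofPred_isCausalKernel_and_le {ε : ℝ} (hε : 0 < ε) :
    IsCompact {f : Fin n → (Fin n → X) → (Fin n → Y) → X → ℝ |
      IsCausalKernel f ∧ ∀ i x y a, ε ≤ f i x y a} := by
  have hclosed : IsClosed {f : Fin n → (Fin n → X) → (Fin n → Y) → X → ℝ |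
      (∀ i x x' y y', (∀ j, j < i → x j = x' j) → (∀ j, j ≤ i → y j = y' j) →
        f i x y = f i x' y') ∧ ∀ i x y, ∑ a, f i x y a = 1} := by
    simp only [Set.ofPred_and, Set.ofPred_forall]
    refine IsClosed.inter ?_ ?_ <;>
      repeat' refine isClosed_iInter fun _ => ?_
    all_goals exact isClosed_eq (by fun_prop) (by fun_prop)
  convert (isCompact_Icc (a := fun _ _ _ _ => ε) (b := fun _ _ _ _ => 1)).inter_left hclosed using 1
  ext f
  refine ⟨fun ⟨hf, hle⟩ => ?_, fun ⟨⟨hcausal, hsum⟩, hle, _⟩ => ?_⟩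
  · exact ⟨⟨hf.causal, hf.sum_eq_one⟩, hle, hf.le_one⟩
  · exact ⟨⟨fun i x y a => hε.trans_le (hle i x y a), hcausal, hsum⟩, hle⟩

variable [DecidableEq X] [Fintype Y] [DecidableEq Y]

/-- The conditional pmf `P(a | xⁱ⁻¹, x̂ⁱ)` of the joint weight `w`, with `ε` added to each letter so
that it is strictly positive. -/
def smoothedKernel (w : (Fin n → X) → (Fin n → Y) → ℝ) (ε : ℝ)
    (i : Fin n) (x : Fin n → X) (y : Fin n → Y) (a : X) : ℝ :=
  (prefixMass w (i + 1) (i + 1) (Function.update x i a) y + ε) /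
    (prefixMass w i (i + 1) x y + ε * Fintype.card X)

lemma isCausalKernel_smoothedKernel {w : (Fin n → X) → (Fin n → Y) → ℝ} (hw : ∀ x y, 0 ≤ w x y)
    {ε : ℝ} (hε : 0 < ε) : IsCausalKernel (smoothedKernel w ε) := by
  have hden : ∀ (i : Fin n) x y, 0 < prefixMass w i (i + 1) x y + ε * Fintype.card X := by
    intro i x y
    have : Nonempty X := ⟨x i⟩
    have := prefixMass_nonneg hw i (i + 1) x y
    positivity
  refine ⟨fun i x y a => ?_, fun i x x' y y' hx hy => funext fun a => ?_, fun i x y => ?_⟩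
  · have := prefixMass_nonneg hw (i + 1) (i + 1) (Function.update x i a) y
    exact div_pos (by positivity) (hden i x y)
  · have hx' : AgreeBelow (i + 1) (Function.update x i a) (Function.update x' i a) :=
      agreeBelow_succ_update_iff.2 ⟨fun j hj => by
        rw [agreeBelow_update_self i x a j hj, hx j hj], Function.update_self ..⟩
    have hy' : AgreeBelow (i + 1) y y' := fun j hj => hy j (Nat.lt_succ_iff.1 hj)
    simp only [smoothedKernel, prefixMass_congr hx' hy', prefixMass_congr (k := i) hx hy']
  · rw [← div_self (hden i x y).ne']
    simp only [smoothedKernel, ← Finset.sum_div, Finset.sum_add_distrib,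
      sum_prefixMass_succ_update_left, Finset.sum_const, Finset.card_univ, nsmul_eq_mul,
      mul_comm ε]

lemma tendsto_logb_smoothedKernel {w : (Fin n → X) → (Fin n → Y) → ℝ} (hw : ∀ x y, 0 ≤ w x y)
    {x : Fin n → X} {y : Fin n → Y} (hxy : 0 < w x y) (b : ℝ) (i : Fin n) :
    Tendsto (fun ε => Real.logb b (smoothedKernel w ε i x y (x i))) (nhdsWithin 0 (Set.Ioi 0))
      (nhds (Real.logb b
        (prefixMass w (i + 1) (i + 1) x y / prefixMass w i (i + 1) x y))) := by
  have hnum := hxy.trans_le (le_prefixMass hw (i + 1) (i + 1) x y)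
  have hden := hxy.trans_le (le_prefixMass hw i (i + 1) x y)
  have hcont : ContinuousAt (fun ε => Real.logb b (smoothedKernel w ε i x y (x i))) 0 := by
    simp only [smoothedKernel, Function.update_eq_self]
    refine ContinuousAt.logb ?_ (by simp [hnum.ne', hden.ne'])
    exact ContinuousAt.div (by fun_prop) (by fun_prop) (by simp [hden.ne'])
  simpa [smoothedKernel] using hcont.tendsto.mono_left nhdsWithin_le_nhds

lemma sum_prod_prefixMass_div_mul_le_one {w : (Fin n → X) → (Fin n → Y) → ℝ}
    (hw : ∀ x y, 0 ≤ w x y) {f : Fin n → (Fin n → X) → (Fin n → Y) → X → ℝ}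
    (hf : IsCausalKernel f) :
    ∑ x, ∑ y, ∏ i : Fin n,
      (prefixMass w i (i + 1) x y / prefixMass w i i x y * f i x y (x i)) ≤ 1 := by
  let g : Fin n → (Fin n → X) → (Fin n → Y) → X → ℝ := fun i x y a =>
    prefixMass w i (i + 1) x y / prefixMass w i i x y * f i x y a
  have hg_nonneg : ∀ i x y a, 0 ≤ g i x y a := fun i x y a => mul_nonneg
    (div_nonneg (prefixMass_nonneg hw ..) (prefixMass_nonneg hw ..)) (hf.pos ..).le
  have hg_congr : ∀ i x x' y y' a, (∀ j, j < i → x j = x' j) → (∀ j, j ≤ i → y j = y' j) →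
      g i x y a = g i x' y' a := by
    intro i x x' y y' a hx hy
    have hy' : AgreeBelow (i + 1) y y' := fun j hj => hy j (Nat.lt_succ_iff.1 hj)
    simp only [g, hf.causal i x x' y y' hx hy, prefixMass_congr (k := i) hx hy',
      prefixMass_congr (k := i) (l := i) hx fun j hj => hy j (le_of_lt hj)]
  have hg_sum : ∀ i x y, ∑ a, ∑ b, g i x (Function.update y i b) a ≤ 1 := by
    intro i x y
    rw [Finset.sum_comm]
    simp only [g, ← Finset.mul_sum, hf.sum_eq_one, mul_one,
      prefixMass_congr (AgreeBelow.refl i x) (agreeBelow_update_self i y _), ← Finset.sum_div,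
      sum_prefixMass_succ_update_right]
    exact div_self_le_one _
  have hle : ∑ z : Fin n → X × Y, ∏ i, g i (Prod.fst ∘ z) (Prod.snd ∘ z) (z i).1 ≤ 1 := by
    refine sum_prod_le_one_of_causal (fun i z => hg_nonneg ..) (fun i z z' hz => ?_) fun i z => ?_
    · rw [hz i le_rfl]
      exact hg_congr _ _ _ _ _ _ (fun j hj => congrArg Prod.fst (hz j hj.le))
        fun j hj => congrArg Prod.snd (hz j hj)
    · refine le_of_eq_of_le ?_ (hg_sum i (Prod.fst ∘ z) (Prod.snd ∘ z))
      simp only [Fintype.sum_prod_type, Function.comp_update, Function.update_self]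
      refine Finset.sum_congr rfl fun a _ => Finset.sum_congr rfl fun b _ => ?_
      exact hg_congr _ _ _ _ _ _ (agreeBelow_update_self i _ a) fun _ _ => rfl
  rwa [← (Equiv.arrowProdEquivProdArrow (Fin n) (fun _ => X) fun _ => Y).symm.sum_comp,
    Fintype.sum_prod_type] at hle

end CausalKernel

section DirectedInformation

variable {X Y : Type} [Fintype X] [Fintype Y] {n : ℕ}
  {p : (Fin n → X) → ℝ} {r : (Fin n → X) → (Fin n → Y) → ℝ}
  {f : Fin n → (Fin n → X) → (Fin n → Y) → X → ℝ}

/-- The joint pmf `p(xⁿ) r(x̂ⁿ|xⁿ)`. -/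
abbrev jointPMF (p : (Fin n → X) → ℝ) (r : (Fin n → X) → (Fin n → Y) → ℝ)
    (x : Fin n → X) (y : Fin n → Y) : ℝ :=
  p x * r x y

lemma jointPMF_nonneg (hp : IsPMF p) (hr : IsCondPMF r) (x : Fin n → X) (y : Fin n → Y) :
    0 ≤ jointPMF p r x y :=
  mul_nonneg (hp.1 x) (hr.1 x y)

lemma sum_jointPMF (hp : IsPMF p) (hr : IsCondPMF r) : ∑ x, ∑ y, jointPMF p r x y = 1 := by
  simp only [jointPMF, ← Finset.mul_sum, hr.2, mul_one, hp.2]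

/-- The integrand `∑ᵢ log₂ fᵢ(xᵢ | xⁱ⁻¹, x̂ⁱ) - log₂ p(xⁿ)`, whose mean is the directed information
when `f` is the true causal kernel of the joint pmf. -/
def causalScore (p : (Fin n → X) → ℝ) (f : Fin n → (Fin n → X) → (Fin n → Y) → X → ℝ)
    (x : Fin n → X) (y : Fin n → Y) : ℝ :=
  ∑ i, Real.logb 2 (f i x y (x i)) - Real.logb 2 (p x)

variable [DecidableEq X] [DecidableEq Y]

lemma causalCond_eq_prod_prefixMass_div (p : (Fin n → X) → ℝ)
    (r : (Fin n → X) → (Fin n → Y) → ℝ) (x : Fin n → X) (y : Fin n → Y) :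
    causalCond p r x y =
      ∏ i : Fin n, prefixMass (jointPMF p r) i (i + 1) x y / prefixMass (jointPMF p r) i i x y := by
  simp only [causalCond, prefixMass, AgreeBelow, Finset.sum_filter, ite_and, Nat.lt_succ_iff,
    Finset.sum_ite_irrel, Finset.sum_const_zero, Fin.val_fin_lt, Fin.val_fin_le]

lemma causalCond_nonneg (hp : IsPMF p) (hr : IsCondPMF r) (x : Fin n → X) (y : Fin n → Y) :
    0 ≤ causalCond p r x y := by
  have hmass := prefixMass_nonneg (jointPMF_nonneg hp hr)
  rw [causalCond_eq_prod_prefixMass_div]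
  exact Finset.prod_nonneg fun i _ => div_nonneg (hmass ..) (hmass ..)

lemma causalCond_pos (hp : IsPMF p) (hr : IsCondPMF r) {x : Fin n → X} {y : Fin n → Y}
    (hxy : 0 < jointPMF p r x y) : 0 < causalCond p r x y := by
  have hmass := fun k l => hxy.trans_le (le_prefixMass (jointPMF_nonneg hp hr) k l x y)
  rw [causalCond_eq_prod_prefixMass_div]
  exact Finset.prod_pos fun i _ => div_pos (hmass ..) (hmass ..)

lemma sum_causalCond_mul_prod_le_one (hp : IsPMF p) (hr : IsCondPMF r) (hf : IsCausalKernel f) :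
    ∑ x, ∑ y, causalCond p r x y * ∏ i, f i x y (x i) ≤ 1 := by
  simp only [causalCond_eq_prod_prefixMass_div, ← Finset.prod_mul_distrib]
  exact sum_prod_prefixMass_div_mul_le_one (jointPMF_nonneg hp hr) hf

lemma sum_mul_causalScore_le_directedInfo (hp : IsPMF p) (hr : IsCondPMF r)
    (hf : IsCausalKernel f) :
    ∑ x, ∑ y, p x * r x y * causalScore p f x y ≤ directedInfo p r := by
  have hprod : ∀ x y, 0 < ∏ i, f i x y (x i) := fun x y => Finset.prod_pos fun i _ => hf.pos ..
  let q : (Fin n → X) → (Fin n → Y) → ℝ := fun x y => causalCond p r x y * ∏ i, f i x y (x i)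
  have hgibbs : 0 ≤ ∑ x, ∑ y, p x * r x y * Real.logb 2 (p x * r x y / q x y) := by
    have hsum : ∑ x, ∑ y, q x y ≤ ∑ x, ∑ y, jointPMF p r x y :=
      (sum_causalCond_mul_prod_le_one hp hr hf).trans_eq (sum_jointPMF hp hr).symm
    simp only [← Fintype.sum_prod_type'] at hsum ⊢
    exact sum_mul_logb_div_nonneg one_lt_two (fun z => jointPMF_nonneg hp hr z.1 z.2)
      (fun z => mul_nonneg (causalCond_nonneg hp hr z.1 z.2) (hprod z.1 z.2).le)
      (fun z hz => mul_pos (causalCond_pos hp hr hz) (hprod z.1 z.2)) hsum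
  have hterm : ∀ x y, p x * r x y * Real.logb 2 (r x y / causalCond p r x y) -
      p x * r x y * causalScore p f x y = p x * r x y * Real.logb 2 (p x * r x y / q x y) := by
    intro x y
    rcases (jointPMF_nonneg hp hr x y).eq_or_lt with hxy | hxy
    · simp [← hxy]
    have hpx : p x ≠ 0 := left_ne_zero_of_mul hxy.ne'
    have hrxy : r x y ≠ 0 := right_ne_zero_of_mul hxy.ne'
    have hc := (causalCond_pos hp hr hxy).ne'
    rw [Real.logb_div hxy.ne' (mul_ne_zero hc (hprod x y).ne'), Real.logb_mul hpx hrxy,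
      Real.logb_mul hc (hprod x y).ne', Real.logb_div hrxy hc,
      Real.logb_prod _ _ fun i _ => (hf.pos i x y (x i)).ne', causalScore]
    ring
  rw [← sub_nonneg]
  simpa only [directedInfo, ← Finset.sum_sub_distrib, hterm] using hgibbs

lemma logb_div_causalCond (hp : IsPMF p) (hr : IsCondPMF r) {x : Fin n → X} {y : Fin n → Y}
    (hxy : 0 < jointPMF p r x y) :
    Real.logb 2 (r x y / causalCond p r x y) =
      ∑ i : Fin n, Real.logb 2 (prefixMass (jointPMF p r) (i + 1) (i + 1) x y /
        prefixMass (jointPMF p r) i (i + 1) x y) - Real.logb 2 (p x) := by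
  have hmass : ∀ k l, prefixMass (jointPMF p r) k l x y ≠ 0 :=
    fun k l => (hxy.trans_le (le_prefixMass (jointPMF_nonneg hp hr) k l x y)).ne'
  have hpx : p x ≠ 0 := left_ne_zero_of_mul hxy.ne'
  have hchain : (∏ i : Fin n, prefixMass (jointPMF p r) (i + 1) (i + 1) x y /
      prefixMass (jointPMF p r) i (i + 1) x y) * causalCond p r x y = p x * r x y := by
    rw [causalCond_eq_prod_prefixMass_div, ← Finset.prod_mul_distrib]
    simpa only [div_mul_div_cancel₀ (hmass _ _), sum_jointPMF hp hr, div_one] using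
      prod_prefixMass_div (jointPMF_nonneg hp hr) hxy
  have hne : ∀ i : Fin n, prefixMass (jointPMF p r) (i + 1) (i + 1) x y /
      prefixMass (jointPMF p r) i (i + 1) x y ≠ 0 := fun i => div_ne_zero (hmass _ _) (hmass _ _)
  rw [← Real.logb_prod _ _ fun i _ => hne i,
    ← Real.logb_div (Finset.prod_ne_zero_iff.2 fun i _ => hne i) hpx]
  congr 1
  rw [div_eq_div_iff (causalCond_pos hp hr hxy).ne' hpx, hchain, mul_comm]

lemma tendsto_sum_mul_causalScore_smoothedKernel (hp : IsPMF p) (hr : IsCondPMF r) :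
    Tendsto (fun ε => ∑ x, ∑ y, p x * r x y *
        causalScore p (smoothedKernel (jointPMF p r) ε) x y)
      (nhdsWithin 0 (Set.Ioi 0)) (nhds (directedInfo p r)) := by
  refine tendsto_finsetSum _ fun x _ => tendsto_finsetSum _ fun y _ => ?_
  rcases (jointPMF_nonneg hp hr x y).eq_or_lt with hxy | hxy
  · simp [← hxy]
  · rw [logb_div_causalCond hp hr hxy]
    exact ((tendsto_finsetSum _ fun i _ => tendsto_logb_smoothedKernel (jointPMF_nonneg hp hr)
      hxy 2 i).sub_const _).const_mul _

theorem isLUB_directedInfo (hp : IsPMF p) (hr : IsCondPMF r) :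
    IsLUB ((fun f => ∑ x, ∑ y, p x * r x y * causalScore p f x y) '' {f | IsCausalKernel f})
      (directedInfo p r) := by
  refine ⟨?_, fun v hv => ?_⟩
  · rintro _ ⟨f, hf, rfl⟩
    exact sum_mul_causalScore_le_directedInfo hp hr hf
  · refine le_of_tendsto (tendsto_sum_mul_causalScore_smoothedKernel hp hr) ?_
    filter_upwards [self_mem_nhdsWithin] with ε hε
    exact hv ⟨_, isCausalKernel_smoothedKernel (jointPMF_nonneg hp hr) hε, rfl⟩

end DirectedInformation

section ConditionalPMF

variable {X Y : Type} [Fintype Y] {n : ℕ}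

lemma ofPred_isCondPMF_eq_pi : {r : (Fin n → X) → (Fin n → Y) → ℝ | IsCondPMF r} =
    Set.univ.pi fun _ => stdSimplex ℝ (Fin n → Y) := by
  ext r
  simp only [IsCondPMF, stdSimplex, Set.mem_pi, Set.mem_univ, true_imp_iff, Set.mem_ofPred_eq,
    forall_and]

lemma isCompact_ofPred_isCondPMF :
    IsCompact {r : (Fin n → X) → (Fin n → Y) → ℝ | IsCondPMF r} := by
  rw [ofPred_isCondPMF_eq_pi]
  exact isCompact_univ_pi fun _ => isCompact_stdSimplex ℝ _

lemma convex_ofPred_isCondPMF :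
    Convex ℝ {r : (Fin n → X) → (Fin n → Y) → ℝ | IsCondPMF r} := by
  rw [ofPred_isCondPMF_eq_pi]
  exact convex_pi fun _ _ => convex_stdSimplex ℝ _

end ConditionalPMF

section Lagrangian

lemma concaveOn_logb {b : ℝ} (hb : 1 < b) : ConcaveOn ℝ (Set.Ioi 0) (Real.logb b) := by
  refine (strictConcaveOn_log_Ioi.concaveOn.smul (inv_nonneg.2 (Real.log_pos hb).le)).congr ?_
  intro t _
  simp only [Real.logb, smul_eq_mul, div_eq_inv_mul]

variable {X Y : Type} [Fintype X] {n : ℕ}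

/-- The dual variables: a multiplier `lam ≥ 0` and a family of strictly positive causal kernels. -/
def dualDomain (X Y : Type) [Fintype X] (n : ℕ) :
    Set (ℝ × (Fin n → (Fin n → X) → (Fin n → Y) → X → ℝ)) :=
  Set.Ici 0 ×ˢ {f | IsCausalKernel f}

lemma convex_dualDomain : Convex ℝ (dualDomain X Y n) :=
  (convex_Ici 0).prod convex_ofPred_isCausalKernel

/-- The cost of reproducing `x` by `y` at the dual point `z`, with the distortion constraint priced
at `z.1`. -/
def dualCost (p : (Fin n → X) → ℝ) (d : (Fin n → X) → (Fin n → Y) → ℝ) (D : ℝ)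
    (z : ℝ × (Fin n → (Fin n → X) → (Fin n → Y) → X → ℝ)) (x : Fin n → X) (y : Fin n → Y) : ℝ :=
  causalScore p z.2 x y + z.1 * (d x y - D)

variable (p : (Fin n → X) → ℝ) (d : (Fin n → X) → (Fin n → Y) → ℝ) (D : ℝ)

lemma concaveOn_dualCost (x : Fin n → X) (y : Fin n → Y) :
    ConcaveOn ℝ (dualDomain X Y n) fun z => dualCost p d D z x y := by
  refine ⟨convex_dualDomain, fun z hz z' hz' s t hs ht hst => ?_⟩
  have hlog : ∑ i, (s * Real.logb 2 (z.2 i x y (x i)) + t * Real.logb 2 (z'.2 i x y (x i))) ≤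
      ∑ i, Real.logb 2 ((s • z + t • z').2 i x y (x i)) :=
    Finset.sum_le_sum fun i _ => (concaveOn_logb one_lt_two).2 (hz.2.pos i x y (x i))
      (hz'.2.pos i x y (x i)) hs ht hst
  rw [Finset.sum_add_distrib, ← Finset.mul_sum, ← Finset.mul_sum] at hlog
  simp only [dualCost, causalScore, Prod.fst_add, Prod.smul_fst, smul_eq_mul]
  linear_combination hlog - Real.logb 2 (p x) * hst

lemma continuousOn_dualCost (x : Fin n → X) (y : Fin n → Y) :
    ContinuousOn (fun z => dualCost p d D z x y) (dualDomain X Y n) := by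
  have hlog : ∀ i, ContinuousOn (fun z : ℝ × (Fin n → (Fin n → X) → (Fin n → Y) → X → ℝ) =>
      Real.logb 2 (z.2 i x y (x i))) (dualDomain X Y n) := fun i =>
    ContinuousOn.logb (by fun_prop) fun z hz => (hz.2.pos i x y (x i)).ne'
  unfold dualCost causalScore
  fun_prop

lemma dualCost_le {z : ℝ × (Fin n → (Fin n → X) → (Fin n → Y) → X → ℝ)}
    (hz : z ∈ dualDomain X Y n) {L : ℝ} (hL : z.1 ≤ L) (s : Finset (Fin n))
    (x : Fin n → X) (y : Fin n → Y) :
    dualCost p d D z x y ≤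
      ∑ i ∈ s, Real.logb 2 (z.2 i x y (x i)) + (L * |d x y - D| - Real.logb 2 (p x)) := by
  have hscore : ∑ i, Real.logb 2 (z.2 i x y (x i)) ≤ ∑ i ∈ s, Real.logb 2 (z.2 i x y (x i)) :=
    Finset.sum_le_sum_of_subset_of_nonpos' (Finset.subset_univ s) fun i _ _ =>
      Real.logb_nonpos one_lt_two (hz.2.pos ..).le (hz.2.le_one ..)
  have hprice : z.1 * (d x y - D) ≤ L * |d x y - D| :=
    (mul_le_mul_of_nonneg_left (le_abs_self _) hz.1).trans
      (mul_le_mul_of_nonneg_right hL (abs_nonneg _))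
  rw [dualCost, causalScore]
  linarith

variable [Fintype Y]

/-- The Lagrangian of the problem defining `Rₙ(D)`, with the directed information replaced by the
mean score of a causal kernel. -/
def lagrangian (r : (Fin n → X) → (Fin n → Y) → ℝ)
    (z : ℝ × (Fin n → (Fin n → X) → (Fin n → Y) → X → ℝ)) : ℝ :=
  ∑ x, ∑ y, p x * r x y * dualCost p d D z x y

variable {p d D} {r : (Fin n → X) → (Fin n → Y) → ℝ}
  {z : ℝ × (Fin n → (Fin n → X) → (Fin n → Y) → X → ℝ)}

lemma lagrangian_eq (hp : IsPMF p) (hr : IsCondPMF r) :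
    lagrangian p d D r z = ∑ x, ∑ y, p x * r x y * causalScore p z.2 x y +
      z.1 * (∑ x, ∑ y, p x * r x y * d x y - D) := by
  have hD : ∑ x, ∑ y, p x * r x y * D = D := by
    simp only [← Finset.sum_mul, ← Finset.mul_sum, hr.2, mul_one, hp.2, one_mul]
  conv_rhs => rw [← hD]
  simp only [lagrangian, dualCost, Finset.mul_sum, ← Finset.sum_add_distrib,
    ← Finset.sum_sub_distrib]
  refine Finset.sum_congr rfl fun x _ => Finset.sum_congr rfl fun y _ => ?_
  ring

lemma lagrangian_le [DecidableEq X] [DecidableEq Y] (hp : IsPMF p) (hr : IsCondPMF r)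
    (hz : z ∈ dualDomain X Y n) :
    lagrangian p d D r z ≤ directedInfo p r + z.1 * (∑ x, ∑ y, p x * r x y * d x y - D) := by
  rw [lagrangian_eq hp hr]
  gcongr
  exact sum_mul_causalScore_le_directedInfo hp hr hz.2

lemma convexOn_lagrangian_left (z : ℝ × (Fin n → (Fin n → X) → (Fin n → Y) → X → ℝ)) :
    ConvexOn ℝ {r | IsCondPMF r} fun r => lagrangian p d D r z := by
  refine ⟨convex_ofPred_isCondPMF, fun r _ r' _ s t _ _ _ => le_of_eq ?_⟩
  simp only [lagrangian, Pi.add_apply, Pi.smul_apply, smul_eq_mul, Finset.mul_sum,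
    ← Finset.sum_add_distrib]
  refine Finset.sum_congr rfl fun x _ => Finset.sum_congr rfl fun y _ => ?_
  ring

lemma concaveOn_lagrangian_right (hp : IsPMF p) (hr : IsCondPMF r) :
    ConcaveOn ℝ (dualDomain X Y n) (lagrangian p d D r) := by
  refine ⟨convex_dualDomain, fun z hz z' hz' s t hs ht hst => ?_⟩
  simp only [lagrangian, smul_eq_mul, Finset.mul_sum, ← Finset.sum_add_distrib]
  refine Finset.sum_le_sum fun x _ => Finset.sum_le_sum fun y _ => ?_
  have hcost := mul_le_mul_of_nonneg_left ((concaveOn_dualCost p d D x y).2 hz hz' hs ht hst)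
    (jointPMF_nonneg hp hr x y)
  simp only [smul_eq_mul] at hcost
  linear_combination hcost

lemma continuousOn_lagrangian_right :
    ContinuousOn (lagrangian p d D r) (dualDomain X Y n) :=
  continuousOn_finsetSum _ fun x _ => continuousOn_finsetSum _ fun y _ =>
    continuousOn_const.mul (continuousOn_dualCost p d D x y)

end Lagrangian

section DualValue

variable {X Y : Type} [Fintype X] [Fintype Y] {n : ℕ} [Nonempty (Fin n → Y)]
  {p : (Fin n → X) → ℝ} {d : (Fin n → X) → (Fin n → Y) → ℝ} {D : ℝ}
  {r : (Fin n → X) → (Fin n → Y) → ℝ}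
  {z : ℝ × (Fin n → (Fin n → X) → (Fin n → Y) → X → ℝ)}

/-- The dual objective, i.e. the minimum of the Lagrangian over conditional pmfs; the inner minimum
is the optimal `log₂ γ(xⁿ) - λ D` of the geometric program. -/
def dualValue (p : (Fin n → X) → ℝ) (d : (Fin n → X) → (Fin n → Y) → ℝ) (D : ℝ)
    (z : ℝ × (Fin n → (Fin n → X) → (Fin n → Y) → X → ℝ)) : ℝ :=
  ∑ x, p x * Finset.univ.inf' Finset.univ_nonempty (dualCost p d D z x)

lemma dualValue_le_lagrangian (hp : IsPMF p) (hr : IsCondPMF r) :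
    dualValue p d D z ≤ lagrangian p d D r z := by
  refine Finset.sum_le_sum fun x _ => ?_
  calc p x * Finset.univ.inf' Finset.univ_nonempty (dualCost p d D z x)
      = ∑ y, p x * r x y * Finset.univ.inf' Finset.univ_nonempty (dualCost p d D z x) := by
        rw [← Finset.sum_mul, ← Finset.mul_sum, hr.2, mul_one]
    _ ≤ ∑ y, p x * r x y * dualCost p d D z x y := by
        gcongr with y
        · exact jointPMF_nonneg hp hr x y
        · exact Finset.inf'_le _ (Finset.mem_univ y)

lemma exists_isCondPMF_lagrangian_eq_dualValue (p : (Fin n → X) → ℝ)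
    (d : (Fin n → X) → (Fin n → Y) → ℝ) (D : ℝ)
    (z : ℝ × (Fin n → (Fin n → X) → (Fin n → Y) → X → ℝ)) :
    ∃ r, IsCondPMF r ∧ lagrangian p d D r z = dualValue p d D z := by
  classical
  choose y _ hy using fun x =>
    Finset.exists_mem_eq_inf' Finset.univ_nonempty (dualCost p d D z x)
  refine ⟨fun x => Pi.single (y x) 1, ⟨fun x y' => ?_, fun x => ?_⟩, ?_⟩
  · exact Pi.single_nonneg (α := fun _ => ℝ).2 zero_le_one y'
  · simp
  · simp [lagrangian, dualValue, hy, Pi.single_apply]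

lemma continuousOn_dualValue :
    ContinuousOn (dualValue p d D) (dualDomain X Y n) :=
  continuousOn_finsetSum _ fun x _ => continuousOn_const.mul <|
    ContinuousOn.finset_inf'_apply _ fun y _ => continuousOn_dualCost p d D x y

lemma fst_le_of_le_dualValue [DecidableEq X] [DecidableEq Y] (hp : IsPMF p) (hr : IsCondPMF r)
    (hslater : ∑ x, ∑ y, p x * r x y * d x y < D) (hz : z ∈ dualDomain X Y n) {v : ℝ}
    (hv : v ≤ dualValue p d D z) :
    z.1 ≤ (directedInfo p r - v) / (D - ∑ x, ∑ y, p x * r x y * d x y) := by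
  rw [le_div_iff₀ (sub_pos.2 hslater)]
  have hweak : dualValue p d D z ≤
      directedInfo p r + z.1 * (∑ x, ∑ y, p x * r x y * d x y - D) :=
    (dualValue_le_lagrangian hp hr).trans (lagrangian_le hp hr hz)
  linarith

lemma dualValue_le_mul_logb_add (hp : IsPMF p) (hz : z ∈ dualDomain X Y n)
    {L : ℝ} (hL : z.1 ≤ L) (i : Fin n) (x : Fin n → X) (y : Fin n → Y) :
    dualValue p d D z ≤ p x * Real.logb 2 (z.2 i x y (x i)) +
      ∑ x', p x' * (L * |d x' y - D| - Real.logb 2 (p x')) := by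
  classical
  have hcost : ∀ x', dualCost p d D z x' y ≤
      (if x' = x then Real.logb 2 (z.2 i x y (x i)) else 0) +
        (L * |d x' y - D| - Real.logb 2 (p x')) := by
    intro x'
    split_ifs with hx
    · simpa only [hx, Finset.sum_singleton] using dualCost_le p d D hz hL {i} x y
    · simpa only [Finset.sum_empty] using dualCost_le p d D hz hL ∅ x' y
  calc dualValue p d D z
      ≤ ∑ x', p x' * ((if x' = x then Real.logb 2 (z.2 i x y (x i)) else 0) +
          (L * |d x' y - D| - Real.logb 2 (p x'))) := by
        refine Finset.sum_le_sum fun x' _ => mul_le_mul_of_nonneg_left ?_ (hp.1 x')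
        exact (Finset.inf'_le _ (Finset.mem_univ y)).trans (hcost x')
    _ = _ := by simp [mul_add, Finset.sum_add_distrib]

lemma exists_pos_forall_le_of_le_dualValue (hp : IsPMF p) (hppos : ∀ x, 0 < p x)
    (d : (Fin n → X) → (Fin n → Y) → ℝ) (D L v : ℝ) :
    ∃ ε > 0, ∀ z ∈ dualDomain X Y n, z.1 ≤ L → v ≤ dualValue p d D z →
      ∀ i x y a, ε ≤ z.2 i x y a := by
  classical
  obtain ⟨K, hK⟩ := (Set.finite_range fun u : (Fin n → X) × (Fin n → Y) =>
    (v - ∑ x', p x' * (L * |d x' u.2 - D| - Real.logb 2 (p x'))) / p u.1).bddBelow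
  refine ⟨2 ^ K, by positivity, fun z hz hL hv i x y a => ?_⟩
  rw [← Real.le_logb_iff_rpow_le one_lt_two (hz.2.pos ..)]
  have hcausal : z.2 i (Function.update x i a) y = z.2 i x y :=
    hz.2.causal _ _ _ _ _ (agreeBelow_update_self i x a) fun _ _ => rfl
  have hbound := hv.trans (dualValue_le_mul_logb_add hp hz hL i (Function.update x i a) y)
  rw [Function.update_self, hcausal] at hbound
  refine (hK ⟨(Function.update x i a, y), rfl⟩).trans ?_
  rw [div_le_iff₀ (hppos _)]
  linarith

lemma exists_isMaxOn_dualValue (hp : IsPMF p) (hppos : ∀ x, 0 < p x)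
    (hr : IsCondPMF r) (hslater : ∑ x, ∑ y, p x * r x y * d x y < D) :
    ∃ z ∈ dualDomain X Y n, IsMaxOn (dualValue p d D) (dualDomain X Y n) z := by
  classical
  obtain ⟨z₀, hz₀⟩ : (dualDomain X Y n).Nonempty :=
    ⟨(0, _), Set.self_mem_Ici, isCausalKernel_uniform⟩
  obtain ⟨L, hL⟩ : ∃ L, ∀ z ∈ dualDomain X Y n, dualValue p d D z₀ ≤ dualValue p d D z → z.1 ≤ L :=
    ⟨_, fun z hz hv => fst_le_of_le_dualValue hp hr hslater hz hv⟩
  obtain ⟨ε, hε, hle⟩ := exists_pos_forall_le_of_le_dualValue hp hppos d D L (dualValue p d D z₀)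
  let K : Set (ℝ × (Fin n → (Fin n → X) → (Fin n → Y) → X → ℝ)) :=
    Set.Icc 0 L ×ˢ {f | IsCausalKernel f ∧ ∀ i x y a, ε ≤ f i x y a}
  have hK : K ⊆ dualDomain X Y n := fun z hz => ⟨hz.1.1, hz.2.1⟩
  have hmem : ∀ z ∈ dualDomain X Y n, dualValue p d D z₀ ≤ dualValue p d D z → z ∈ K :=
    fun z hz hv => ⟨⟨hz.1, hL z hz hv⟩, hz.2, hle z hz (hL z hz hv) hv⟩
  have hKcompact : IsCompact K := isCompact_Icc.prod (isCompact_ofPred_isCausalKernel_and_le hε)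
  obtain ⟨z, hzK, hmax⟩ := hKcompact.exists_isMaxOn ⟨z₀, hmem z₀ hz₀ le_rfl⟩
    (continuousOn_dualValue.mono hK)
  refine ⟨z, hK hzK, fun z' hz' => ?_⟩
  rcases le_total (dualValue p d D z₀) (dualValue p d D z') with hv | hv
  · exact hmax (hmem z' hz' hv)
  · exact hv.trans (hmax (hmem z₀ hz₀ le_rfl))

end DualValue

section Duality

lemma nonpos_of_forall_add_mul_le {a b c : ℝ} (h : ∀ t, 0 ≤ t → b + t * a ≤ c) : a ≤ 0 := by
  by_contra! ha
  have := h ((|c - b| + 1) / a) (by positivity)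
  rw [div_mul_cancel₀ _ ha.ne'] at this
  linarith [le_abs_self (c - b)]

variable {X Y : Type} [Fintype X] [Fintype Y] {n : ℕ} {p : (Fin n → X) → ℝ}
  {d : (Fin n → X) → (Fin n → Y) → ℝ} {D : ℝ}

lemma exists_isCondPMF_lagrangian_le [Nonempty (Fin n → Y)] (hp : IsPMF p) {v : ℝ}
    (hv : ∀ z ∈ dualDomain X Y n, dualValue p d D z ≤ v) :
    ∃ r, IsCondPMF r ∧ ∀ z ∈ dualDomain X Y n, lagrangian p d D r z ≤ v := by
  refine exists_forall_le_of_forall_exists_le (S := {r | IsCondPMF r})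
    ?_ isCompact_ofPred_isCondPMF convex_ofPred_isCondPMF convex_dualDomain
    (fun z _ => ?_) (fun z _ => (convexOn_lagrangian_left z).quasiconvexOn)
    (fun r _ => continuousOn_lagrangian_right.upperSemicontinuousOn)
    (fun r hr => (concaveOn_lagrangian_right hp hr).quasiconcaveOn) fun z hz => ?_
  · obtain ⟨r, hr, _⟩ := exists_isCondPMF_lagrangian_eq_dualValue p d D (0, fun _ _ _ _ => 1)
    exact ⟨r, hr⟩
  · unfold lagrangian
    exact Continuous.lowerSemicontinuous (by fun_prop) |>.lowerSemicontinuousOn _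
  · obtain ⟨r, hr, heq⟩ := exists_isCondPMF_lagrangian_eq_dualValue p d D z
    exact ⟨r, hr, heq.trans_le (hv z hz)⟩

variable [DecidableEq X] [DecidableEq Y]

lemma distortion_le_and_directedInfo_le_of_lagrangian_le (hp : IsPMF p)
    {r : (Fin n → X) → (Fin n → Y) → ℝ} (hr : IsCondPMF r) {v : ℝ}
    (hv : ∀ z ∈ dualDomain X Y n, lagrangian p d D r z ≤ v) :
    ∑ x, ∑ y, p x * r x y * d x y ≤ D ∧ directedInfo p r ≤ v := by
  constructor
  · let f : Fin n → (Fin n → X) → (Fin n → Y) → X → ℝ := fun _ _ _ _ => (Fintype.card X : ℝ)⁻¹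
    have hprice : ∀ t, 0 ≤ t → ∑ x, ∑ y, p x * r x y * causalScore p f x y +
        t * (∑ x, ∑ y, p x * r x y * d x y - D) ≤ v := fun t ht => by
      simpa only [lagrangian_eq hp hr] using hv (t, f) ⟨ht, isCausalKernel_uniform⟩
    exact sub_nonpos.1 (nonpos_of_forall_add_mul_le hprice)
  · refine (isLUB_directedInfo hp hr).2 ?_
    rintro _ ⟨f, hf, rfl⟩
    simpa [lagrangian_eq hp hr] using hv (0, f) ⟨Set.self_mem_Ici, hf⟩

variable [Nonempty (Fin n → Y)]

lemma dualValue_le_directedInfo (hp : IsPMF p) {r : (Fin n → X) → (Fin n → Y) → ℝ}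
    (hr : IsCondPMF r) (hdist : ∑ x, ∑ y, p x * r x y * d x y ≤ D)
    {z : ℝ × (Fin n → (Fin n → X) → (Fin n → Y) → X → ℝ)} (hz : z ∈ dualDomain X Y n) :
    dualValue p d D z ≤ directedInfo p r :=
  calc dualValue p d D z ≤ lagrangian p d D r z := dualValue_le_lagrangian hp hr
    _ ≤ directedInfo p r + z.1 * (∑ x, ∑ y, p x * r x y * d x y - D) := lagrangian_le hp hr hz
    _ ≤ directedInfo p r :=
      add_le_of_nonpos_right (mul_nonpos_of_nonneg_of_nonpos hz.1 (sub_nonpos.2 hdist))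

theorem exists_isLeast_directedInfo_dualValue (hp : IsPMF p) (hppos : ∀ x, 0 < p x)
    (hfeas : ∃ r : (Fin n → X) → (Fin n → Y) → ℝ, IsCondPMF r ∧
      ∑ x, ∑ y, p x * r x y * d x y < D) :
    ∃ z ∈ dualDomain X Y n, IsMaxOn (dualValue p d D) (dualDomain X Y n) z ∧
      IsLeast {v | ∃ r : (Fin n → X) → (Fin n → Y) → ℝ, IsCondPMF r ∧
        ∑ x, ∑ y, p x * r x y * d x y ≤ D ∧ v = directedInfo p r} (dualValue p d D z) := by
  obtain ⟨r₀, hr₀, hslater⟩ := hfeas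
  obtain ⟨z, hz, hmax⟩ := exists_isMaxOn_dualValue hp hppos hr₀ hslater
  obtain ⟨r, hr, hsaddle⟩ := exists_isCondPMF_lagrangian_le hp fun z' hz' => hmax hz'
  obtain ⟨hdist, hle⟩ := distortion_le_and_directedInfo_le_of_lagrangian_le hp hr hsaddle
  refine ⟨z, hz, hmax, ⟨r, hr, hdist, ?_⟩, ?_⟩
  · exact (dualValue_le_directedInfo hp hr hdist hz).antisymm hle
  · rintro _ ⟨r', hr', hdist', rfl⟩
    exact dualValue_le_directedInfo hp hr' hdist' hz

end Duality

section GeometricProgram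

variable {X Y : Type} [Fintype X] [Fintype Y] {n : ℕ} [Nonempty (Fin n → Y)]
  {p : (Fin n → X) → ℝ} {d : (Fin n → X) → (Fin n → Y) → ℝ} {D lam : ℝ}
  {f : Fin n → (Fin n → X) → (Fin n → Y) → X → ℝ}

lemma gpObjective_le_dualValue (hp : IsPMF p) {γ : (Fin n → X) → ℝ}
    (hγ : ∀ x y, Real.logb 2 (p x) + Real.logb 2 (γ x) - lam * d x y -
      ∑ i, Real.logb 2 (f i x y (x i)) ≤ 0) :
    -(lam * D) + ∑ x, p x * Real.logb 2 (γ x) ≤ dualValue p d D (lam, f) := by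
  calc -(lam * D) + ∑ x, p x * Real.logb 2 (γ x)
      = ∑ x, p x * (Real.logb 2 (γ x) - lam * D) := by
        simp only [mul_sub, Finset.sum_sub_distrib, ← Finset.sum_mul, hp.2]
        ring
    _ ≤ dualValue p d D (lam, f) := by
        refine Finset.sum_le_sum fun x _ => mul_le_mul_of_nonneg_left ?_ (hp.1 x)
        refine Finset.le_inf' _ _ fun y _ => ?_
        rw [dualCost, causalScore]
        linarith [hγ x y]

lemma exists_gpObjective_eq_dualValue (hp : IsPMF p) (d : (Fin n → X) → (Fin n → Y) → ℝ)
    (D lam : ℝ) (f : Fin n → (Fin n → X) → (Fin n → Y) → X → ℝ) :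
    ∃ γ : (Fin n → X) → ℝ, (∀ x, 0 < γ x) ∧
      (∀ x y, Real.logb 2 (p x) + Real.logb 2 (γ x) - lam * d x y -
        ∑ i, Real.logb 2 (f i x y (x i)) ≤ 0) ∧
      -(lam * D) + ∑ x, p x * Real.logb 2 (γ x) = dualValue p d D (lam, f) := by
  let m : (Fin n → X) → ℝ := fun x =>
    Finset.univ.inf' Finset.univ_nonempty (dualCost p d D (lam, f) x)
  have hlog : ∀ x, Real.logb 2 ((2 : ℝ) ^ (m x + lam * D)) = m x + lam * D :=
    fun x => Real.logb_rpow two_pos (by norm_num)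
  refine ⟨fun x => 2 ^ (m x + lam * D), fun x => by positivity, fun x y => ?_, ?_⟩
  · have hm : m x ≤ dualCost p d D (lam, f) x y := Finset.inf'_le _ (Finset.mem_univ y)
    rw [dualCost, causalScore] at hm
    linarith [hlog x]
  · simp only [hlog, mul_add, Finset.sum_add_distrib, ← Finset.sum_mul, hp.2, dualValue, m]
    ring

end GeometricProgram

lemma nonempty_of_isPMF_of_isCondPMF {X Y : Type} [Fintype X] [Fintype Y] {n : ℕ}
    {p : (Fin n → X) → ℝ} (hp : IsPMF p) {r : (Fin n → X) → (Fin n → Y) → ℝ} (hr : IsCondPMF r) :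
    Nonempty (Fin n → Y) := by
  obtain ⟨x, -, -⟩ := Finset.exists_ne_zero_of_sum_ne_zero (hp.2.trans_ne one_ne_zero)
  obtain ⟨y, -, -⟩ := Finset.exists_ne_zero_of_sum_ne_zero ((hr.2 x).trans_ne one_ne_zero)
  exact ⟨y⟩

theorem Rn_geometric_programming_form_general
    {X Y : Type} [Fintype X] [DecidableEq X] [Fintype Y] [DecidableEq Y]
    (n : ℕ) (hn : 1 ≤ n)
    (p : (Fin n → X) → ℝ) (hp : IsPMF p) (hppos : ∀ x, 0 < p x)
    (d : (Fin n → X) → (Fin n → Y) → ℝ) (D : ℝ)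
    (hfeas : ∃ r : (Fin n → X) → (Fin n → Y) → ℝ, IsCondPMF r ∧
      (∑ x, ∑ y, p x * r x y * d x y) < D) :
    IsGreatest
      {v : ℝ | ∃ (lam : ℝ) (γ : (Fin n → X) → ℝ)
        (f : Fin n → (Fin n → X) → (Fin n → Y) → X → ℝ),
        0 ≤ lam ∧ (∀ x, 0 < γ x) ∧
        (∀ i x y a, 0 < f i x y a) ∧
        (∀ i x x' y y', (∀ j, j < i → x j = x' j) → (∀ j, j ≤ i → y j = y' j) →
          f i x y = f i x' y') ∧
        (∀ i x y, ∑ a, f i x y a = 1) ∧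
        (∀ x y, Real.logb 2 (p x) + Real.logb 2 (γ x) - lam * d x y -
          (∑ i, Real.logb 2 (f i x y (x i))) ≤ 0) ∧
        v = (1 / (n : ℝ)) * (-(lam * D) + ∑ x, p x * Real.logb 2 (γ x))}
      (Rn n p d D) := by
  have : Nonempty (Fin n → Y) := nonempty_of_isPMF_of_isCondPMF hp hfeas.choose_spec.1
  obtain ⟨⟨lam, f⟩, ⟨hlam, hf⟩, hmax, hleast⟩ :=
    exists_isLeast_directedInfo_dualValue hp hppos hfeas
  have hRn : Rn n p d D = 1 / (n : ℝ) * dualValue p d D (lam, f) := by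
    rw [Rn, hleast.csInf_eq]
  have hn' : (0 : ℝ) < 1 / n := one_div_pos.2 (Nat.cast_pos.2 hn)
  rw [hRn]
  constructor
  · obtain ⟨γ, hγpos, hγ, hobj⟩ := exists_gpObjective_eq_dualValue hp d D lam f
    exact ⟨lam, γ, f, hlam, hγpos, hf.pos, hf.causal, hf.sum_eq_one, hγ, by rw [hobj]⟩
  · rintro _ ⟨lam', γ, f', hlam', -, hpos, hcausal, hsum, hγ, rfl⟩
    refine mul_le_mul_of_nonneg_left ?_ hn'.le
    exact (gpObjective_le_dualValue hp hγ).trans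
      (hmax (show (lam', f') ∈ dualDomain X Y n from ⟨hlam', hpos, hcausal, hsum⟩))

end FFRD

open FFRD in
/-- Theorem 3, geometric programming form: `Rₙ(D)` equals the maximum of
`(1/n)(−λD + Σ_{xⁿ} p(xⁿ) log₂ γ(xⁿ))` over `λ ≥ 0`, `γ > 0` and strictly positive causal
families `p′_i(x_i|x^{i−1},x̂^i)`, subject to the log-form constraint and normalization. -/
theorem Rn_geometric_programming_form
    {X Y : Type} [Fintype X] [DecidableEq X] [Fintype Y] [DecidableEq Y]
    (n : ℕ) (hn : 1 ≤ n)
    (p : (Fin n → X) → ℝ) (hp : IsPMF p) (hppos : ∀ x, 0 < p x)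
    (d : (Fin n → X) → (Fin n → Y) → ℝ) (hd : ∀ x y, 0 ≤ d x y)
    (D : ℝ) (hD : 0 < D)
    (hfeas : ∃ r : (Fin n → X) → (Fin n → Y) → ℝ, IsCondPMF r ∧
      (∑ x, ∑ y, p x * r x y * d x y) < D) :
    IsGreatest
      {v : ℝ | ∃ (lam : ℝ) (γ : (Fin n → X) → ℝ)
        (f : Fin n → (Fin n → X) → (Fin n → Y) → X → ℝ),
        0 ≤ lam ∧ (∀ x, 0 < γ x) ∧
        (∀ i x y a, 0 < f i x y a) ∧
        (∀ i x x' y y', (∀ j, j < i → x j = x' j) → (∀ j, j ≤ i → y j = y' j) →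
          f i x y = f i x' y') ∧
        (∀ i x y, ∑ a, f i x y a = 1) ∧
        (∀ x y, Real.logb 2 (p x) + Real.logb 2 (γ x) - lam * d x y -
          (∑ i, Real.logb 2 (f i x y (x i))) ≤ 0) ∧
        v = (1 / (n : ℝ)) * (-(lam * D) + ∑ x, p x * Real.logb 2 (γ x))}
      (Rn n p d D) := by
  exact Rn_geometric_programming_form_general n hn p hp hppos d D hfeas
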